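/- Coupling lemma for tight convex dominance: Let X = ∏_{i=1}^n [aᵢ, bᵢ] ⊂ ℝⁿ be a compact box with 0 ≤ aᵢ < bᵢ for each i. Let α and β be Borel probability measures on X with α ≼_cvx β, let u : X → ℝ be convex, coordinatewise nondecreasing, and 1-Lipschitz with respect to the ℓ¹ norm, with ∫_X u dα = ∫_X u dβ, and let g : X → [0,1]ⁿ be a Borel-measurable map such that for every z, y ∈ X, u(y) ≥ u(z) + g(z)·(y − z) (i.e., g(z) is a subgradient of u at z). Then there exists a Borel probability measure π on X × X with first marginal α and second marginal β such that, writing E_π[Y | 𝔉₁] for the conditional expectation under π of the second coordinate with respect to the σ-algebra generated by the first coordinate, the following hold π-almost surely at (a, b): (i) u(b) = u(a) + g(a)·(b − a); (ii) for all y ∈ X, u(y) ≥ u(b) + g(a)·(y − b), i.e., g(a) is a subgradient of u at b; (iii) E_π[Y | 𝔉₁] ≥ a componentwise; and (iv) u(E_π[Y | 𝔉₁]) = u(a). -/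

import Mathlib

open MeasureTheory Set

/-- ℓ¹ distance on `Fin n → ℝ`. -/
noncomputable def l1dist {n : ℕ} (x y : Fin n → ℝ) : ℝ := ∑ i, |x i - y i|

/-- The box `∏ i, [a i, b i]` in `ℝⁿ`. -/
def box {n : ℕ} (a b : Fin n → ℝ) : Set (Fin n → ℝ) := {x | ∀ i, x i ∈ Set.Icc (a i) (b i)}

/-- `u ∈ 𝒰(X)`: continuous, coordinatewise nondecreasing and convex on `X`. -/
def memU {n : ℕ} (X : Set (Fin n → ℝ)) (u : (Fin n → ℝ) → ℝ) : Prop :=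
  ContinuousOn u X ∧ (∀ x ∈ X, ∀ y ∈ X, (∀ i, x i ≤ y i) → u x ≤ u y) ∧ ConvexOn ℝ X u

/-- `u ∈ ℒ₁(X)`: 1-Lipschitz with respect to the ℓ¹ norm on `X`. -/
def memL1 {n : ℕ} (X : Set (Fin n → ℝ)) (u : (Fin n → ℝ) → ℝ) : Prop :=
  ∀ x ∈ X, ∀ y ∈ X, u x - u y ≤ l1dist x y

/-!
A coupling `(X, Y)` of `α` and `β` with `𝔼[f Y | X] ≥ f X` for all `f ∈ 𝒰(K)` is sought among the
couplings satisfying the linear constraints `0 ≤ 𝔼[c (X, Y)]`, where `c` runs over the costs with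
`c (x, ·) ∈ 𝒰(K)` and `c (x, x) ≥ 0`; the costs `φ x * (f y - f x)` with `φ ≥ 0` suffice. By the
M. Riesz extension and Riesz–Markov theorems it exists as soon as `c ≤ φ ⊕ ψ` forces
`∫ φ dα + ∫ ψ dβ ≥ 0`. Now `v = sup_x (c (x, ·) - φ x)` lies in `𝒰(K)` and `-φ ≤ v ≤ ψ`, so that
`-∫ φ dα ≤ ∫ v dα ≤ ∫ v dβ ≤ ∫ ψ dβ`.

For the coordinates, the constraints say `X ≤ 𝔼[Y | X]`. Tightness turns
`u X ≤ u (𝔼[Y | X]) ≤ 𝔼[u Y | X]` into equalities. Since `g ≥ 0`, the subgradient gap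
`u Y - u X - g X ⬝ᵥ (Y - X) ≥ 0` then has conditional expectation `-g X ⬝ᵥ (𝔼[Y | X] - X) ≤ 0`, so
it vanishes; and `g X`, whose supporting hyperplane at `X` touches `u` at `Y`, is a subgradient
there as well.
-/

open Filter Topology
open scoped BoundedContinuousFunction NNReal

lemma map_eq_of_forall_integral_continuousMap_eq {X Y : Type*} [MeasurableSpace X]
    [TopologicalSpace Y] [MeasurableSpace Y] [BorelSpace Y] [HasOuterApproxClosed Y] {π : Measure X}
    [IsFiniteMeasure π] {ν : Measure Y} [IsFiniteMeasure ν] {T : X → Y} (hT : Measurable T)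
    (h : ∀ f : C(Y, ℝ), ∫ x, f (T x) ∂π = ∫ y, f y ∂ν) : π.map T = ν := by
  refine ext_of_forall_integral_eq_of_IsFiniteMeasure fun f => ?_
  rw [integral_map hT.aemeasurable f.continuous.aestronglyMeasurable]
  exact h f.toContinuousMap

section CompactSpaces

variable {X Y : Type*} [TopologicalSpace X] [CompactSpace X] [MeasurableSpace X] [BorelSpace X]
  [TopologicalSpace Y] [CompactSpace Y] [MeasurableSpace Y] [BorelSpace Y]

lemma integrable_continuousMap (μ : Measure X) [IsFiniteMeasure μ] (f : C(X, ℝ)) :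
    Integrable f μ :=
  f.continuous.integrable_of_hasCompactSupport (HasCompactSupport.of_compactSpace f)

lemma exists_isFiniteMeasure_integral_eq [T2Space X] (L : C(X, ℝ) →ₗ[ℝ] ℝ)
    (hL : ∀ f, 0 ≤ f → 0 ≤ L f) :
    ∃ μ : Measure X, IsFiniteMeasure μ ∧ ∀ f : C(X, ℝ), ∫ x, f x ∂μ = L f := by
  let toContinuousMap : CompactlySupportedContinuousMap X ℝ →ₗ[ℝ] C(X, ℝ) :=
    { toFun := fun f => f.toContinuousMap
      map_add' := fun _ _ => rfl
      map_smul' := fun _ _ => rfl }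
  let Λ : CompactlySupportedContinuousMap X ℝ →ₚ[ℝ] ℝ :=
    PositiveLinearMap.mk₀ (L ∘ₗ toContinuousMap) fun f hf => hL _ fun x => hf x
  exact ⟨RealRMK.rieszMeasure Λ, ⟨isCompact_univ.measure_lt_top⟩, fun f =>
    RealRMK.integral_rieszMeasure Λ (CompactlySupportedContinuousMap.continuousMapEquiv f)⟩

lemma exists_isFiniteMeasure_integral_eq_and_integral_nonneg [T2Space X]
    (C : PointedCone ℝ C(X, ℝ)) (Λ : C(X, ℝ) →ₗ.[ℝ] ℝ) (hone : 1 ∈ Λ.domain)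
    (hΛ : ∀ f : Λ.domain, ∀ c ∈ C, c ≤ f → 0 ≤ Λ f) :
    ∃ μ : Measure X, IsFiniteMeasure μ ∧ (∀ f : Λ.domain, ∫ x, (f : C(X, ℝ)) x ∂μ = Λ f) ∧
      ∀ c ∈ C, 0 ≤ ∫ x, c x ∂μ := by
  obtain ⟨L, hLΛ, hL⟩ := riesz_extension (C ⊔ PointedCone.positive ℝ C(X, ℝ)) Λ
    (fun f hf => by
      obtain ⟨c, hc, p, hp, hcp⟩ := Submodule.mem_sup.1 hf
      exact hΛ f c hc (hcp ▸ le_add_of_nonneg_right hp))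
    (fun f => ⟨‖f‖ • ⟨1, hone⟩, Submodule.mem_sup_right fun x => by
      simpa using neg_le_iff_add_nonneg'.1 (neg_le_of_abs_le (f.norm_coe_le_norm x))⟩)
  obtain ⟨μ, hμ, hμL⟩ := exists_isFiniteMeasure_integral_eq L
    fun f hf => hL f (Submodule.mem_sup_right hf)
  exact ⟨μ, hμ, fun f => (hμL f).trans (hLΛ f),
    fun c hc => (hL c (Submodule.mem_sup_left hc)).trans_eq (hμL c).symm⟩

/-- The map `(φ, ψ) ↦ φ ⊕ ψ`, where `(φ ⊕ ψ) (x, y) = φ x + ψ y`. -/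
def directSumMap (X Y : Type*) [TopologicalSpace X] [TopologicalSpace Y] :
    C(X, ℝ) × C(Y, ℝ) →ₗ[ℝ] C(X × Y, ℝ) where
  toFun φψ := φψ.1.comp .fst + φψ.2.comp .snd
  map_add' _ _ := ContinuousMap.ext fun _ => add_add_add_comm _ _ _ _
  map_smul' _ _ := ContinuousMap.ext fun _ => (mul_add _ _ _).symm

/-- Kantorovich duality for transport under the linear constraints `0 ≤ ∫ c ∂π`, `c ∈ C`: a
feasible coupling exists unless some `c ≤ φ ⊕ ψ` shows that none does. -/
theorem exists_coupling_forall_integral_nonneg [T2Space X] [T2Space Y]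
    [SecondCountableTopologyEither X Y] [HasOuterApproxClosed X] [HasOuterApproxClosed Y]
    (α : Measure X) (β : Measure Y) [IsProbabilityMeasure α] [IsProbabilityMeasure β]
    (C : PointedCone ℝ C(X × Y, ℝ))
    (hC : ∀ (φ : C(X, ℝ)) (ψ : C(Y, ℝ)), ∀ c ∈ C, (∀ x y, c (x, y) ≤ φ x + ψ y) →
      0 ≤ ∫ x, φ x ∂α + ∫ y, ψ y ∂β) :
    ∃ π : Measure (X × Y), π.map Prod.fst = α ∧ π.map Prod.snd = β ∧
      ∀ c ∈ C, 0 ≤ ∫ p, c p ∂π := by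
  let I : C(X × Y, ℝ) →ₗ[ℝ] ℝ :=
    { toFun := fun f => ∫ p, f p ∂α.prod β
      map_add' := fun f g =>
        integral_add (integrable_continuousMap _ f) (integrable_continuousMap _ g)
      map_smul' := fun r f => integral_const_mul r f }
  have hI : ∀ φ ψ, I (directSumMap X Y (φ, ψ)) = ∫ x, φ x ∂α + ∫ y, ψ y ∂β := fun φ ψ => by
    calc I (directSumMap X Y (φ, ψ)) = ∫ p, φ p.1 ∂α.prod β + ∫ p, ψ p.2 ∂α.prod β :=
          integral_add (integrable_continuousMap _ (φ.comp .fst))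
            (integrable_continuousMap _ (ψ.comp .snd))
      _ = ∫ x, φ x ∂α + ∫ y, ψ y ∂β := by simp [integral_fun_fst, integral_fun_snd]
  let Λ : C(X × Y, ℝ) →ₗ.[ℝ] ℝ := ⟨(directSumMap X Y).range, I ∘ₗ (directSumMap X Y).range.subtype⟩
  obtain ⟨π, hπ, hπΛ, hπC⟩ := exists_isFiniteMeasure_integral_eq_and_integral_nonneg C Λ
    ⟨(1, 0), by ext; simp [directSumMap]⟩ (by
      rintro ⟨_, ⟨φ, ψ⟩, rfl⟩ c hc hle
      exact (hC φ ψ c hc fun x y => hle (x, y)).trans_eq (hI φ ψ).symm)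
  have hπI : ∀ φ ψ, ∫ p, directSumMap X Y (φ, ψ) p ∂π = ∫ x, φ x ∂α + ∫ y, ψ y ∂β := fun φ ψ =>
    (hπΛ ⟨_, (φ, ψ), rfl⟩).trans (hI φ ψ)
  refine ⟨π, ?_, ?_, hπC⟩
  · exact map_eq_of_forall_integral_continuousMap_eq measurable_fst fun φ => by
      simpa [directSumMap] using hπI φ 0
  · exact map_eq_of_forall_integral_continuousMap_eq measurable_snd fun ψ => by
      simpa [directSumMap] using hπI 0 ψ

end CompactSpaces

lemma convexOn_iSup {ι E : Type*} [Nonempty ι] [AddCommMonoid E] [SMul ℝ E] {s : Set E}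
    {f : ι → E → ℝ} (hf : ∀ i, ConvexOn ℝ s (f i)) (hbdd : ∀ x ∈ s, BddAbove (range (f · x))) :
    ConvexOn ℝ s fun x => ⨆ i, f i x := by
  refine ⟨(hf (Classical.arbitrary ι)).1, fun x hx y hy a b ha hb hab => ciSup_le fun i => ?_⟩
  calc f i (a • x + b • y) ≤ a • f i x + b • f i y := (hf i).2 hx hy ha hb hab
    _ ≤ a • (⨆ i, f i x) + b • ⨆ i, f i y := by
        gcongr
        exacts [le_ciSup (hbdd x hx) i, le_ciSup (hbdd y hy) i]

section CompactFamily

variable {X E : Type*} [TopologicalSpace X] [CompactSpace X] [TopologicalSpace E] {K : Set E}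
  {f : X → E → ℝ}

lemma bddAbove_range_of_continuousOn (hf : ContinuousOn (Function.uncurry f) (univ ×ˢ K)) {y : E}
    (hy : y ∈ K) : BddAbove (range (f · y)) :=
  (isCompact_range (hf.comp_continuous (Continuous.prodMk_left y)
    fun _ => ⟨mem_univ _, hy⟩)).bddAbove

lemma continuousOn_iSup (hf : ContinuousOn (Function.uncurry f) (univ ×ˢ K)) :
    ContinuousOn (fun y => ⨆ x, f x y) K := by
  have hf' : Continuous ↿(fun (y : K) (x : X) => f x y) :=
    hf.comp_continuous (by fun_prop : Continuous fun p : K × X => (p.2, (p.1 : E)))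
      fun p => ⟨mem_univ _, p.1.2⟩
  have hsup := isCompact_univ.continuous_sSup hf'
  simp only [image_univ, sSup_range] at hsup
  exact continuousOn_iff_continuous_domRestrict.2 hsup

end CompactFamily

section IncreasingConvexOrder

variable {E : Type*} [AddCommGroup E] [Module ℝ E] [TopologicalSpace E] [Preorder E] {K : Set E}

/-- The class `𝒰(K)` of continuous, nondecreasing, convex functions on `K`; only the values on `K`
matter. -/
structure IncreasingConvexOn (K : Set E) (v : E → ℝ) : Prop where
  continuousOn : ContinuousOn v K
  monotoneOn : MonotoneOn v K
  convexOn : ConvexOn ℝ K v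

/-- The order `α ≼_cvx β` on measures concentrated on `K`. -/
def IncreasingConvexLE [MeasurableSpace E] (K : Set E) (α β : Measure E) : Prop :=
  ∀ v, IncreasingConvexOn K v → ∫ x, v x ∂α ≤ ∫ x, v x ∂β

lemma IncreasingConvexOn.iSup {X : Type*} [TopologicalSpace X] [CompactSpace X] [Nonempty X]
    {f : X → E → ℝ} (hf : ContinuousOn (Function.uncurry f) (univ ×ˢ K))
    (hmono : ∀ x, MonotoneOn (f x) K) (hconv : ∀ x, ConvexOn ℝ K (f x)) :
    IncreasingConvexOn K fun y => ⨆ x, f x y where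
  continuousOn := continuousOn_iSup hf
  monotoneOn _ hy _ hz hyz :=
    ciSup_mono (bddAbove_range_of_continuousOn hf hz) fun x => hmono x hy hz hyz
  convexOn := convexOn_iSup hconv fun _ hy => bddAbove_range_of_continuousOn hf hy

/-- A cost `c x y` on `K × K` that lies in `𝒰(K)` as a function of `y` and is nonnegative on the
diagonal. -/
structure IsIncreasingConvexKernel (K : Set E) (c : E → E → ℝ) : Prop where
  continuousOn : ContinuousOn (Function.uncurry c) (K ×ˢ K)
  monotoneOn : ∀ x ∈ K, MonotoneOn (c x) K
  convexOn : ∀ x ∈ K, ConvexOn ℝ K (c x)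
  diag_nonneg : ∀ x ∈ K, 0 ≤ c x x

/-- The increasing convex kernels on `K`, as a cone of continuous functions on `K × K`. -/
def increasingConvexCone (hK : Convex ℝ K) : PointedCone ℝ C(K × K, ℝ) where
  carrier := {k | ∃ c, IsIncreasingConvexKernel K c ∧ ∀ p, k p = c p.1 p.2}
  zero_mem' := ⟨0, ⟨continuousOn_const, fun _ _ => monotoneOn_const,
    fun _ _ => convexOn_const 0 hK, fun _ _ => le_rfl⟩, fun _ => rfl⟩
  add_mem' := by
    rintro k l ⟨c, hc, hkc⟩ ⟨d, hd, hld⟩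
    exact ⟨c + d, ⟨hc.continuousOn.add hd.continuousOn,
      fun x hx => (hc.monotoneOn x hx).add (hd.monotoneOn x hx),
      fun x hx => (hc.convexOn x hx).add (hd.convexOn x hx),
      fun x hx => add_nonneg (hc.diag_nonneg x hx) (hd.diag_nonneg x hx)⟩,
      fun p => congrArg₂ (· + ·) (hkc p) (hld p)⟩
  smul_mem' := by
    rintro ⟨r, hr⟩ k ⟨c, hc, hkc⟩
    exact ⟨r • c, ⟨hc.continuousOn.const_smul r,
      fun x hx _ hy _ hz hyz => mul_le_mul_of_nonneg_left (hc.monotoneOn x hx hy hz hyz) hr,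
      fun x hx => (hc.convexOn x hx).smul hr,
      fun x hx => mul_nonneg hr (hc.diag_nonneg x hx)⟩,
      fun p => congrArg (r * ·) (hkc p)⟩

section Measure

variable [MeasurableSpace E] [BorelSpace E]

lemma IsIncreasingConvexKernel.integral_add_integral_nonneg [T2Space E] {c : E → E → ℝ}
    (hc : IsIncreasingConvexKernel K c) (hK : IsCompact K) {α β : Measure K}
    [IsProbabilityMeasure α] [IsProbabilityMeasure β]
    (hαβ : IncreasingConvexLE K (α.map (↑)) (β.map (↑))) {φ ψ : C(K, ℝ)}
    (hle : ∀ x y : K, c x y ≤ φ x + ψ y) : 0 ≤ ∫ x, φ x ∂α + ∫ y, ψ y ∂β := by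
  have : CompactSpace K := isCompact_iff_compactSpace.1 hK
  have : Nonempty K := nonempty_of_isProbabilityMeasure α
  let f : K → E → ℝ := fun x y => c x y - φ x
  have hf : ContinuousOn (Function.uncurry f) (univ ×ˢ K) :=
    (hc.continuousOn.comp (by fun_prop : Continuous fun p : K × E => ((p.1 : E), p.2)).continuousOn
      fun p hp => ⟨p.1.2, hp.2⟩).sub (φ.continuous.comp continuous_fst).continuousOn
  have hv : IncreasingConvexOn K fun y => ⨆ x, f x y := .iSup hf
    (fun x _ hy _ hz hyz => sub_le_sub_right (hc.monotoneOn x x.2 hy hz hyz) _)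
    fun x => (hc.convexOn x x.2).sub (concaveOn_const _ (hc.convexOn x x.2).1)
  let v : C(K, ℝ) := ⟨fun y => ⨆ x, f x y, hv.continuousOn.domRestrict⟩
  have hφv (x : K) : -φ x ≤ v x := calc
    -φ x ≤ c x x - φ x := by linarith [hc.diag_nonneg x x.2]
    _ ≤ v x := le_ciSup (bddAbove_range_of_continuousOn hf x.2) x
  have hvψ (y : K) : v y ≤ ψ y := ciSup_le fun x => by linarith [hle x y]
  have hval := MeasurableEmbedding.subtype_coe hK.measurableSet
  suffices -∫ x, φ x ∂α ≤ ∫ y, ψ y ∂β by linarith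
  calc -∫ x, φ x ∂α = ∫ x, -φ x ∂α := (integral_neg _).symm
    _ ≤ ∫ x, v x ∂α :=
        integral_mono (integrable_continuousMap α φ).neg (integrable_continuousMap α v) hφv
    _ ≤ ∫ y, v y ∂β := by
        have h := hαβ _ hv
        rwa [hval.integral_map, hval.integral_map] at h
    _ ≤ ∫ y, ψ y ∂β :=
        integral_mono (integrable_continuousMap β v) (integrable_continuousMap β ψ) hvψ

variable [TopologicalSpace.MetrizableSpace E] [SecondCountableTopology E]

lemma exists_coupling_subtype_forall_kernel_nonneg (hK : IsCompact K) (hconv : Convex ℝ K)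
    (α β : Measure K) [IsProbabilityMeasure α] [IsProbabilityMeasure β]
    (hαβ : IncreasingConvexLE K (α.map (↑)) (β.map (↑))) :
    ∃ π : Measure (K × K), π.map Prod.fst = α ∧ π.map Prod.snd = β ∧
      ∀ c, IsIncreasingConvexKernel K c → 0 ≤ ∫ p, c p.1 p.2 ∂π := by
  have : CompactSpace K := isCompact_iff_compactSpace.1 hK
  obtain ⟨π, hπα, hπβ, hπ⟩ := exists_coupling_forall_integral_nonneg α β
    (increasingConvexCone hconv) (by
      rintro φ ψ k ⟨c, hc, hkc⟩ hle
      exact hc.integral_add_integral_nonneg hK hαβ fun x y => (hkc (x, y)).symm.trans_le (hle x y))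
  refine ⟨π, hπα, hπβ, fun c hc => hπ ⟨fun p => c p.1 p.2, ?_⟩ ⟨c, hc, fun _ => rfl⟩⟩
  exact hc.continuousOn.comp_continuous
    (by fun_prop : Continuous fun p : K × K => ((p.1 : E), (p.2 : E))) fun p => ⟨p.1.2, p.2.2⟩

theorem exists_coupling_forall_kernel_nonneg (hK : IsCompact K) (hconv : Convex ℝ K)
    (α β : Measure E) [IsProbabilityMeasure α] [IsProbabilityMeasure β] (hα : ∀ᵐ x ∂α, x ∈ K)
    (hβ : ∀ᵐ x ∂β, x ∈ K) (hαβ : IncreasingConvexLE K α β) :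
    ∃ π : Measure (E × E), π.map Prod.fst = α ∧ π.map Prod.snd = β ∧
      ∀ c, IsIncreasingConvexKernel K c → 0 ≤ ∫ p, c p.1 p.2 ∂π := by
  have hval := MeasurableEmbedding.subtype_coe hK.measurableSet
  have hmap {μ : Measure E} (hμ : ∀ᵐ x ∂μ, x ∈ K) :
      (μ.comap ((↑) : K → E)).map (↑) = μ := by
    rw [map_comap_subtype_coe hK.measurableSet, Measure.restrict_eq_self_of_ae_mem hμ]
  have := hval.isProbabilityMeasure_comap (μ := α) (by simpa)
  have := hval.isProbabilityMeasure_comap (μ := β) (by simpa)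
  obtain ⟨π, hπα, hπβ, hπ⟩ := exists_coupling_subtype_forall_kernel_nonneg hK hconv
    (α.comap (↑)) (β.comap (↑)) (by rwa [hmap hα, hmap hβ])
  refine ⟨π.map (Prod.map (↑) (↑)), ?_, ?_, fun c hc => ?_⟩
  · rw [← hmap hα, ← hπα, Measure.map_map (by fun_prop) (by fun_prop),
      Measure.map_map (by fun_prop) (by fun_prop)]
    rfl
  · rw [← hmap hβ, ← hπβ, Measure.map_map (by fun_prop) (by fun_prop),
      Measure.map_map (by fun_prop) (by fun_prop)]
    rfl
  · rw [(hval.prodMap hval).integral_map]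
    exact hπ c hc

end Measure

end IncreasingConvexOrder

section NonnegativityTests

variable {E : Type*} [TopologicalSpace E] [MeasurableSpace E] [BorelSpace E] {μ : Measure E}
  {f : E → ℝ}

lemma setIntegral_nonneg_of_forall_integral_boundedContinuous_mul_nonneg [HasOuterApproxClosed E]
    (hf : Integrable f μ) (h : ∀ φ : E →ᵇ ℝ≥0, 0 ≤ ∫ x, φ x * f x ∂μ) {F : Set E}
    (hF : IsClosed F) : 0 ≤ ∫ x in F, f x ∂μ := by
  have hlim : Tendsto (fun n => ∫ x, hF.apprSeq n x * f x ∂μ) atTop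
      (𝓝 (∫ x, F.indicator f x ∂μ)) := by
    refine tendsto_integral_of_dominated_convergence (fun x => ‖f x‖) (fun n => ?_) hf.norm
      (fun n => .of_forall fun x => ?_) (.of_forall fun x => ?_)
    · exact (by fun_prop : Continuous fun x => (hF.apprSeq n x : ℝ)).aestronglyMeasurable.mul hf.1
    · rw [norm_mul]
      exact mul_le_of_le_one_left (norm_nonneg _)
        (by simpa using HasOuterApproxClosed.apprSeq_apply_le_one hF n x)
    · have hx := tendsto_pi_nhds.1 (HasOuterApproxClosed.tendsto_apprSeq hF) x
      convert (NNReal.tendsto_coe.2 hx).mul_const (f x)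
      by_cases hxF : x ∈ F <;> simp [hxF]
  rw [← integral_indicator hF.measurableSet]
  exact ge_of_tendsto' hlim fun n => h _

variable [IsFiniteMeasure μ] [μ.WeaklyRegular]

lemma ae_nonneg_of_forall_isClosed_setIntegral_nonneg (hf : Integrable f μ)
    (h : ∀ F, IsClosed F → 0 ≤ ∫ x in F, f x ∂μ) : 0 ≤ᵐ[μ] f := by
  refine ae_nonneg_of_forall_setIntegral_nonneg hf fun s hs _ => ?_
  choose F hFs hF hμF using fun n : ℕ =>
    hs.exists_isClosed_sdiff_lt (measure_ne_top μ s) (ε := (n : ENNReal)⁻¹) (by simp)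
  have hdiff : Tendsto (fun n => ∫ x in s \ F n, f x ∂μ) atTop (𝓝 0) :=
    hf.tendsto_setIntegral_nhds_zero <| tendsto_of_tendsto_of_tendsto_of_le_of_le
      tendsto_const_nhds ENNReal.tendsto_inv_nat_nhds_zero (fun _ => zero_le) fun n => (hμF n).le
  have hsplit (n : ℕ) : ∫ x in s \ F n, f x ∂μ ≤ ∫ x in s, f x ∂μ := by
    rw [setIntegral_sdiff (hF n).measurableSet hf.integrableOn (hFs n)]
    exact sub_le_self _ (h _ (hF n))
  exact le_of_tendsto' hdiff hsplit

lemma ae_nonneg_of_forall_integral_boundedContinuous_mul_nonneg [HasOuterApproxClosed E]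
    (hf : Integrable f μ) (h : ∀ φ : E →ᵇ ℝ≥0, 0 ≤ ∫ x, φ x * f x ∂μ) : 0 ≤ᵐ[μ] f :=
  ae_nonneg_of_forall_isClosed_setIntegral_nonneg hf fun _ =>
    setIntegral_nonneg_of_forall_integral_boundedContinuous_mul_nonneg hf h

end NonnegativityTests

section ConditionalExpectation

variable {Ω : Type*} {m m₀ : MeasurableSpace Ω} {P : Measure Ω}

lemma integral_mul_condExp (hm : m ≤ m₀) [SigmaFinite (P.trim hm)] {G D : Ω → ℝ}
    (hG : StronglyMeasurable[m] G) (hD : Integrable D P)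
    (hGD : Integrable (fun ω => G ω * D ω) P) :
    ∫ ω, G ω * P[D | m] ω ∂P = ∫ ω, G ω * D ω ∂P :=
  calc ∫ ω, G ω * P[D | m] ω ∂P = ∫ ω, P[fun ω => G ω * D ω | m] ω ∂P :=
        integral_congr_ae (condExp_mul_of_stronglyMeasurable_left hG hGD hD).symm
    _ = ∫ ω, G ω * D ω ∂P := integral_condExp hm

lemma integral_mul_nonneg_of_condExp_nonneg (hm : m ≤ m₀) [SigmaFinite (P.trim hm)] {G D : Ω → ℝ}
    (hG : StronglyMeasurable[m] G) (hG₀ : 0 ≤ᵐ[P] G) (hD : Integrable D P)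
    (hGD : Integrable (fun ω => G ω * D ω) P) (hD₀ : 0 ≤ᵐ[P] P[D | m]) :
    0 ≤ ∫ ω, G ω * D ω ∂P := by
  rw [← integral_mul_condExp hm hG hD hGD]
  exact integral_nonneg_of_ae (hG₀.mp (hD₀.mono fun _ => flip mul_nonneg))

lemma condExp_comap_nonneg {E : Type*} [TopologicalSpace E] [MeasurableSpace E] [BorelSpace E]
    [HasOuterApproxClosed E] [IsFiniteMeasure P] {X : Ω → E} (hX : Measurable X)
    [(P.map X).WeaklyRegular] {D : Ω → ℝ} (hD : Integrable D P)
    (h : ∀ φ : E →ᵇ ℝ≥0, 0 ≤ ∫ ω, φ (X ω) * D ω ∂P) :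
    0 ≤ᵐ[P] P[D | MeasurableSpace.comap X inferInstance] := by
  obtain ⟨k, hk, hkX⟩ := (stronglyMeasurable_condExp (f := D) (μ := P)
    (m := MeasurableSpace.comap X inferInstance)).exists_eq_measurable_comp
  have hkint : Integrable k (P.map X) :=
    (integrable_map_measure hk.aestronglyMeasurable hX.aemeasurable).2 (hkX ▸ integrable_condExp)
  have hk₀ : 0 ≤ᵐ[P.map X] k := by
    refine ae_nonneg_of_forall_integral_boundedContinuous_mul_nonneg hkint fun φ => ?_
    have hφ : StronglyMeasurable fun x => (φ x : ℝ) :=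
      (by fun_prop : Continuous fun x => (φ x : ℝ)).stronglyMeasurable
    calc 0 ≤ ∫ ω, φ (X ω) * D ω ∂P := h φ
      _ = ∫ ω, φ (X ω) * (k ∘ X) ω ∂P := by
          rw [← hkX, integral_mul_condExp hX.comap_le (G := fun ω => φ (X ω))
            (hφ.comp_measurable (comap_measurable X)) hD]
          exact hD.bdd_mul (hφ.comp_measurable hX).aestronglyMeasurable
            (.of_forall fun ω => by
              simpa using
                NNReal.coe_le_coe.2 (BoundedContinuousFunction.NNReal.upper_bound φ (X ω)))
      _ = ∫ x, φ x * k x ∂P.map X :=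
          (integral_map hX.aemeasurable (hφ.mul hk).aestronglyMeasurable).symm
  rw [hkX]
  exact ae_of_ae_map hX.aemeasurable hk₀

end ConditionalExpectation

lemma integrable_comp_of_continuousOn {Ω E : Type*} [MeasurableSpace Ω] [TopologicalSpace E]
    [T2Space E] [MeasurableSpace E] [BorelSpace E] {P : Measure Ω} [IsFiniteMeasure P] {K : Set E}
    (hK : IsCompact K) {f : E → ℝ} (hf : ContinuousOn f K) {X : Ω → E} (hX : AEMeasurable X P)
    (hXK : ∀ᵐ ω ∂P, X ω ∈ K) : Integrable (fun ω => f (X ω)) P := by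
  have hmap : ∀ᵐ x ∂P.map X, x ∈ K := (ae_map_iff hX hK.measurableSet).2 hXK
  have hfK := hf.integrableOn_compact hK (μ := P.map X)
  rw [IntegrableOn, Measure.restrict_eq_self_of_ae_mem hmap] at hfK
  exact hfK.comp_aemeasurable hX

section Strassen

variable {E : Type*} [AddCommGroup E] [Module ℝ E] [TopologicalSpace E] [Preorder E]
  {K : Set E}

lemma IncreasingConvexOn.isIncreasingConvexKernel_mul_sub {f : E → ℝ}
    (hf : IncreasingConvexOn K f) {φ : E → ℝ} (hφ : ContinuousOn φ K) (hφ₀ : ∀ x ∈ K, 0 ≤ φ x) :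
    IsIncreasingConvexKernel K fun x y => φ x * (f y - f x) where
  continuousOn := (hφ.comp continuousOn_fst fun _ hp => hp.1).mul
    ((hf.continuousOn.comp continuousOn_snd fun _ hp => hp.2).sub
      (hf.continuousOn.comp continuousOn_fst fun _ hp => hp.1))
  monotoneOn x hx _ hy _ hz hyz :=
    mul_le_mul_of_nonneg_left (sub_le_sub_right (hf.monotoneOn hy hz hyz) _) (hφ₀ x hx)
  convexOn x hx := (hf.convexOn.sub (concaveOn_const (f x) hf.convexOn.1)).smul (hφ₀ x hx)
  diag_nonneg x _ := by simp

variable [MeasurableSpace E] [BorelSpace E] [TopologicalSpace.MetrizableSpace E]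
  [SecondCountableTopology E]

lemma condExp_sub_nonneg_of_forall_kernel_nonneg (hK : IsCompact K) {π : Measure (E × E)}
    [IsFiniteMeasure π] (hfst : ∀ᵐ p ∂π, p.1 ∈ K) (hsnd : ∀ᵐ p ∂π, p.2 ∈ K)
    (hπ : ∀ c, IsIncreasingConvexKernel K c → 0 ≤ ∫ p, c p.1 p.2 ∂π) {f : E → ℝ}
    (hf : IncreasingConvexOn K f) :
    0 ≤ᵐ[π] π[fun p => f p.2 - f p.1 | MeasurableSpace.comap Prod.fst inferInstance] := by
  refine condExp_comap_nonneg measurable_fst ?_ fun φ => hπ _ (hf.isIncreasingConvexKernel_mul_sub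
    (by fun_prop : Continuous fun x => (φ x : ℝ)).continuousOn fun x _ => (φ x).2)
  exact (integrable_comp_of_continuousOn hK hf.continuousOn measurable_snd.aemeasurable hsnd).sub
    (integrable_comp_of_continuousOn hK hf.continuousOn measurable_fst.aemeasurable hfst)

/-- Strassen's theorem for the increasing convex order. -/
theorem exists_coupling_forall_condExp_sub_nonneg (hK : IsCompact K) (hconv : Convex ℝ K)
    (α β : Measure E) [IsProbabilityMeasure α] [IsProbabilityMeasure β] (hα : ∀ᵐ x ∂α, x ∈ K)
    (hβ : ∀ᵐ x ∂β, x ∈ K) (hαβ : IncreasingConvexLE K α β) :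
    ∃ π : Measure (E × E), IsProbabilityMeasure π ∧ π.map Prod.fst = α ∧ π.map Prod.snd = β ∧
      ∀ f, IncreasingConvexOn K f →
        0 ≤ᵐ[π] π[fun p => f p.2 - f p.1 | MeasurableSpace.comap Prod.fst inferInstance] := by
  obtain ⟨π, rfl, rfl, hπ⟩ := exists_coupling_forall_kernel_nonneg hK hconv α β hα hβ hαβ
  have : IsProbabilityMeasure π := Measure.isProbabilityMeasure_of_map Prod.fst
  exact ⟨π, this, rfl, rfl, fun f hf => condExp_sub_nonneg_of_forall_kernel_nonneg hK
    (ae_of_ae_map measurable_fst.aemeasurable hα) (ae_of_ae_map measurable_snd.aemeasurable hβ)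
    hπ hf⟩

end Strassen

section Tightness

variable {Ω ι : Type*} {m m₀ : MeasurableSpace Ω} {P : Measure Ω}

lemma ae_eq_of_ae_le_of_integral_le {f g : Ω → ℝ} (hf : Integrable f P) (hg : Integrable g P)
    (hle : f ≤ᵐ[P] g) (hint : ∫ ω, g ω ∂P ≤ ∫ ω, f ω ∂P) : f =ᵐ[P] g :=
  (integral_eq_iff_of_ae_le hf hg hle).1 (le_antisymm (integral_mono_ae hf hg hle) hint)

lemma IncreasingConvexOn.comp_condExp_ae_eq {E : Type*} [NormedAddCommGroup E] [NormedSpace ℝ E]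
    [CompleteSpace E] [Preorder E] {K : Set E} {u : E → ℝ} (hu : IncreasingConvexOn K u)
    (hK : IsClosed K) [IsFiniteMeasure P] (hm : m ≤ m₀) {X Y : Ω → E}
    (hXK : ∀ᵐ ω ∂P, X ω ∈ K) (hYK : ∀ᵐ ω ∂P, Y ω ∈ K) (hY : Integrable Y P)
    (huX : Integrable (fun ω => u (X ω)) P) (huY : Integrable (fun ω => u (Y ω)) P)
    (hle : X ≤ᵐ[P] P[Y | m]) (hint : ∫ ω, u (Y ω) ∂P ≤ ∫ ω, u (X ω) ∂P) :
    (fun ω => u (P[Y | m] ω)) =ᵐ[P] fun ω => u (X ω) := by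
  have hmono : ∀ᵐ ω ∂P, u (X ω) ≤ u (P[Y | m] ω) := by
    filter_upwards [hXK, hu.convexOn.1.condExp_mem hm hY hK hYK, hle] with ω hXω hZω hω
    exact hu.monotoneOn hXω hZω hω
  have hjensen : ∀ᵐ ω ∂P, u (P[Y | m] ω) ≤ P[u ∘ Y | m] ω :=
    hu.convexOn.map_condExp_le hm hu.continuousOn.lowerSemicontinuousOn hYK hK hY huY
  have heq : (fun ω => u (X ω)) =ᵐ[P] P[u ∘ Y | m] :=
    ae_eq_of_ae_le_of_integral_le huX integrable_condExp
      (hmono.mp (hjensen.mono fun _ h h' => h'.trans h)) ((integral_condExp hm).trans_le hint)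
  filter_upwards [hmono, hjensen, heq] with ω hω hω' hω''
  exact le_antisymm (hω'.trans_eq hω''.symm) hω

lemma condExp_sub_nonneg_of_integral_eq [IsFiniteMeasure P] (hm : m ≤ m₀) {U V : Ω → ℝ}
    (hU : Integrable U P) (hV : Integrable V P) (h : 0 ≤ᵐ[P] P[V - U | m])
    (hint : ∫ ω, U ω ∂P = ∫ ω, V ω ∂P) : 0 ≤ᵐ[P] P[U - V | m] := by
  have hzero : P[V - U | m] =ᵐ[P] 0 :=
    (integral_eq_zero_iff_of_nonneg_ae h integrable_condExp).1 <| by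
      rw [integral_condExp hm, integral_sub' hV hU, hint, sub_self]
  filter_upwards [hzero, condExp_neg (μ := P) (V - U) m] with ω hω hneg
  rw [neg_sub] at hneg
  simp [hneg, hω]

variable [Fintype ι]

lemma ae_le_condExp_of_forall_condExp_sub_nonneg [IsFiniteMeasure P] (hm : m ≤ m₀)
    {X Y : Ω → ι → ℝ} (hXm : StronglyMeasurable[m] X) (hX : Integrable X P) (hY : Integrable Y P)
    (h : ∀ i, 0 ≤ᵐ[P] P[fun ω => Y ω i - X ω i | m]) : X ≤ᵐ[P] P[Y | m] := by
  have hZ : P[Y - X | m] =ᵐ[P] P[Y | m] - X :=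
    (condExp_sub hY hX m).trans (by rw [condExp_of_stronglyMeasurable hm hXm hX])
  have hcoord (i : ι) : (fun ω => P[Y - X | m] ω i) =ᵐ[P] P[fun ω => Y ω i - X ω i | m] :=
    (ContinuousLinearMap.proj (R := ℝ) (φ := fun _ : ι => ℝ) i).comp_condExp_comm (hY.sub hX)
  filter_upwards [hZ, ae_all_iff.2 hcoord, ae_all_iff.2 h] with ω hZω hω hnonneg i
  have hi := (hnonneg i).trans_eq (hω i).symm
  rw [hZω] at hi
  exact sub_nonneg.1 hi

lemma ae_sum_mul_eq_zero_of_integrable [IsFiniteMeasure P] (hm : m ≤ m₀) {G D : ι → Ω → ℝ}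
    (hG : ∀ i, StronglyMeasurable[m] (G i)) (hG₀ : ∀ i, 0 ≤ᵐ[P] G i)
    (hD : ∀ i, Integrable (D i) P) (hD₀ : ∀ i, 0 ≤ᵐ[P] P[D i | m])
    (hGD : ∀ i, Integrable (fun ω => G i ω * D i ω) P) (hle : ∀ᵐ ω ∂P, ∑ i, G i ω * D i ω ≤ 0) :
    ∀ᵐ ω ∂P, ∑ i, G i ω * D i ω = 0 := by
  refine ae_eq_of_ae_le_of_integral_le (P := P)
    (integrable_finsetSum _ fun i _ => hGD i) (integrable_zero _ _ _) hle ?_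
  rw [integral_finsetSum _ fun i _ => hGD i, integral_zero]
  exact Finset.sum_nonneg fun i _ =>
    integral_mul_nonneg_of_condExp_nonneg hm (hG i) (hG₀ i) (hD i) (hGD i) (hD₀ i)

lemma ae_sum_mul_eq_zero [IsFiniteMeasure P] (hm : m ≤ m₀) {G D : ι → Ω → ℝ}
    (hG : ∀ i, StronglyMeasurable[m] (G i)) (hG₀ : ∀ i, 0 ≤ᵐ[P] G i)
    (hD : ∀ i, Integrable (D i) P) (hD₀ : ∀ i, 0 ≤ᵐ[P] P[D i | m])
    (hle : ∀ᵐ ω ∂P, ∑ i, G i ω * D i ω ≤ 0) : ∀ᵐ ω ∂P, ∑ i, G i ω * D i ω = 0 := by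
  -- The products `G i * D i` need not be integrable; dividing by `1 + ∑ j, |G j|` makes them so.
  let w : Ω → ℝ := fun ω => (1 + ∑ j, |G j ω|)⁻¹
  have hw₀ (ω : Ω) : 0 < w ω := by positivity
  have hwG (i : ι) : StronglyMeasurable[m] fun ω => w ω * G i ω :=
    (((Finset.measurable_fun_sum _ fun j _ => (hG j).norm.measurable).const_add
      1).inv.mul (hG i).measurable).stronglyMeasurable
  have hwG_le (i : ι) (ω : Ω) : ‖w ω * G i ω‖ ≤ 1 := by
    rw [norm_mul, Real.norm_of_nonneg (hw₀ ω).le, inv_mul_le_one₀ (by positivity)]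
    exact (Finset.single_le_sum (f := fun j => |G j ω|) (fun _ _ => abs_nonneg _)
      (Finset.mem_univ i)).trans (le_add_of_nonneg_left zero_le_one)
  have hsum (ω : Ω) : ∑ i, w ω * G i ω * D i ω = w ω * ∑ i, G i ω * D i ω := by
    simp only [Finset.mul_sum, mul_assoc]
  have hzero : ∀ᵐ ω ∂P, ∑ i, w ω * G i ω * D i ω = 0 :=
    ae_sum_mul_eq_zero_of_integrable hm hwG
      (fun i => (hG₀ i).mono fun ω hω => mul_nonneg (hw₀ ω).le hω) hD hD₀
      (fun i => (hD i).bdd_mul ((hwG i).mono hm).aestronglyMeasurable (.of_forall (hwG_le i)))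
      (hle.mono fun ω hω => (hsum ω).trans_le (mul_nonpos_of_nonneg_of_nonpos (hw₀ ω).le hω))
  filter_upwards [hzero] with ω hω
  exact (mul_eq_zero.1 ((hsum ω).symm.trans hω)).resolve_left (hw₀ ω).ne'

lemma ae_add_dotProduct_eq_zero [IsFiniteMeasure P] (hm : m ≤ m₀) {D : Ω → ℝ} {S G : Ω → ι → ℝ}
    (hD : Integrable D P) (hD₀ : 0 ≤ᵐ[P] P[D | m]) (hS : ∀ i, Integrable (fun ω => S ω i) P)
    (hS₀ : ∀ i, 0 ≤ᵐ[P] P[fun ω => S ω i | m]) (hG : StronglyMeasurable[m] G)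
    (hG₀ : 0 ≤ᵐ[P] G) (hle : ∀ᵐ ω ∂P, D ω + G ω ⬝ᵥ S ω ≤ 0) :
    ∀ᵐ ω ∂P, D ω + G ω ⬝ᵥ S ω = 0 := by
  have hzero := ae_sum_mul_eq_zero (P := P) (ι := Option ι) (G := fun i ω => i.elim 1 (G ω))
    (D := fun i ω => i.elim (D ω) (S ω)) hm ?_ ?_ ?_ ?_ ?_
  · simpa [Fintype.sum_option, dotProduct] using hzero
  · rintro (_ | i)
    exacts [stronglyMeasurable_const, (continuous_apply i).comp_stronglyMeasurable hG]
  · rintro (_ | i)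
    exacts [.of_forall fun _ => zero_le_one, hG₀.mono fun _ h => h i]
  · exact Option.rec hD hS
  · exact Option.rec hD₀ hS₀
  · simpa [Fintype.sum_option, dotProduct] using hle

end Tightness

section Coupling

variable {ι : Type*} {K : Set (ι → ℝ)} {u : (ι → ℝ) → ℝ} {g : (ι → ℝ) → ι → ℝ}

lemma IncreasingConvexOn.eval (hK : Convex ℝ K) (i : ι) :
    IncreasingConvexOn K fun x : ι → ℝ => x i where
  continuousOn := (continuous_apply i).continuousOn
  monotoneOn _ _ _ _ hxy := hxy i
  convexOn := (LinearMap.proj i : (ι → ℝ) →ₗ[ℝ] ℝ).convexOn hK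

variable [Fintype ι]

lemma add_dotProduct_le_of_eq_tangent {v x y : ι → ℝ} (hsub : ∀ z ∈ K, u x + v ⬝ᵥ (z - x) ≤ u z)
    (htangent : u y = u x + v ⬝ᵥ (y - x)) : ∀ z ∈ K, u y + v ⬝ᵥ (z - y) ≤ u z := fun z hz =>
  calc u y + v ⬝ᵥ (z - y) = u x + v ⬝ᵥ (z - x) := by
        rw [htangent, add_assoc, ← dotProduct_add, sub_add_sub_cancel']
    _ ≤ u z := hsub z hz

theorem ae_tangent_and_le_condExp_of_integral_eq {Ω : Type*} {m m₀ : MeasurableSpace Ω}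
    {P : Measure Ω} [IsFiniteMeasure P] (hm : m ≤ m₀) (hK : IsCompact K) (hconv : Convex ℝ K)
    {X Y : Ω → ι → ℝ} (hX : Measurable[m] X) (hY : AEMeasurable Y P) (hXK : ∀ᵐ ω ∂P, X ω ∈ K)
    (hYK : ∀ᵐ ω ∂P, Y ω ∈ K)
    (hXY : ∀ f, IncreasingConvexOn K f → 0 ≤ᵐ[P] P[fun ω => f (Y ω) - f (X ω) | m])
    (hu : IncreasingConvexOn K u) (htight : ∫ ω, u (X ω) ∂P = ∫ ω, u (Y ω) ∂P)
    (hg : Measurable g) (hg₀ : ∀ z ∈ K, 0 ≤ g z)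
    (hsub : ∀ z ∈ K, ∀ y ∈ K, u z + g z ⬝ᵥ (y - z) ≤ u y) :
    ∀ᵐ ω ∂P, u (Y ω) = u (X ω) + g (X ω) ⬝ᵥ (Y ω - X ω) ∧
      X ω ≤ P[Y | m] ω ∧ u (P[Y | m] ω) = u (X ω) := by
  have hintX {f} (hf : IncreasingConvexOn K f) : Integrable (fun ω => f (X ω)) P :=
    integrable_comp_of_continuousOn hK hf.continuousOn (hX.mono hm le_rfl).aemeasurable hXK
  have hintY {f} (hf : IncreasingConvexOn K f) : Integrable (fun ω => f (Y ω)) P :=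
    integrable_comp_of_continuousOn hK hf.continuousOn hY hYK
  have hcoord (i : ι) := IncreasingConvexOn.eval hconv i
  have hle : X ≤ᵐ[P] P[Y | m] :=
    ae_le_condExp_of_forall_condExp_sub_nonneg hm hX.stronglyMeasurable
      (.of_eval fun i => hintX (hcoord i)) (.of_eval fun i => hintY (hcoord i))
      fun i => hXY _ (hcoord i)
  have hbary : (fun ω => u (P[Y | m] ω)) =ᵐ[P] fun ω => u (X ω) :=
    hu.comp_condExp_ae_eq hK.isClosed hm hXK hYK (.of_eval fun i => hintY (hcoord i))
      (hintX hu) (hintY hu) hle htight.ge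
  have hgap : ∀ᵐ ω ∂P, u (X ω) - u (Y ω) + g (X ω) ⬝ᵥ (Y ω - X ω) ≤ 0 := by
    filter_upwards [hXK, hYK] with ω hXω hYω
    linarith [hsub _ hXω _ hYω]
  have htangent : ∀ᵐ ω ∂P, u (X ω) - u (Y ω) + g (X ω) ⬝ᵥ (Y ω - X ω) = 0 :=
    ae_add_dotProduct_eq_zero hm ((hintX hu).sub (hintY hu))
      (condExp_sub_nonneg_of_integral_eq hm (hintX hu) (hintY hu) (hXY u hu) htight)
      (fun i => (hintY (hcoord i)).sub (hintX (hcoord i))) (fun i => hXY _ (hcoord i))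
      (hg.comp hX).stronglyMeasurable (hXK.mono fun ω hω => hg₀ _ hω) hgap
  filter_upwards [hle, hbary, htangent] with ω hω hω' hω''
  exact ⟨by linarith, hω, hω'⟩

theorem coupling_lemma_tight_convex_dominance_general (hK : IsCompact K) (hconv : Convex ℝ K)
    (α β : Measure (ι → ℝ)) [IsProbabilityMeasure α] [IsProbabilityMeasure β]
    (hα : ∀ᵐ x ∂α, x ∈ K) (hβ : ∀ᵐ x ∂β, x ∈ K) (hαβ : IncreasingConvexLE K α β)
    (hu : IncreasingConvexOn K u) (htight : ∫ x, u x ∂α = ∫ x, u x ∂β)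
    (hg : Measurable g) (hg₀ : ∀ z ∈ K, 0 ≤ g z)
    (hsub : ∀ z ∈ K, ∀ y ∈ K, u z + g z ⬝ᵥ (y - z) ≤ u y) :
    ∃ π : Measure ((ι → ℝ) × (ι → ℝ)), IsProbabilityMeasure π ∧
      π.map Prod.fst = α ∧ π.map Prod.snd = β ∧
      ∀ᵐ p ∂π, u p.2 = u p.1 + g p.1 ⬝ᵥ (p.2 - p.1) ∧
        (∀ y ∈ K, u p.2 + g p.1 ⬝ᵥ (y - p.2) ≤ u y) ∧
        p.1 ≤ π[Prod.snd | MeasurableSpace.comap Prod.fst inferInstance] p ∧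
        u (π[Prod.snd | MeasurableSpace.comap Prod.fst inferInstance] p) = u p.1 := by
  obtain ⟨π, hprob, rfl, rfl, hπ⟩ :=
    exists_coupling_forall_condExp_sub_nonneg hK hconv α β hα hβ hαβ
  have hintegrable {μ : Measure (ι → ℝ)} [IsFiniteMeasure μ] (hμ : ∀ᵐ x ∂μ, x ∈ K) :
      Integrable u μ := integrable_comp_of_continuousOn hK hu.continuousOn aemeasurable_id hμ
  rw [integral_map measurable_fst.aemeasurable (hintegrable hα).1,
    integral_map measurable_snd.aemeasurable (hintegrable hβ).1] at htight
  have hfst : ∀ᵐ p ∂π, p.1 ∈ K := ae_of_ae_map measurable_fst.aemeasurable hα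
  have hsnd : ∀ᵐ p ∂π, p.2 ∈ K := ae_of_ae_map measurable_snd.aemeasurable hβ
  refine ⟨π, hprob, rfl, rfl, ?_⟩
  filter_upwards [hfst, ae_tangent_and_le_condExp_of_integral_eq measurable_fst.comap_le hK hconv
    (comap_measurable Prod.fst) measurable_snd.aemeasurable hfst hsnd hπ hu htight hg hg₀ hsub]
    with p hp ⟨htangent, hle, hbary⟩
  exact ⟨htangent, add_dotProduct_le_of_eq_tangent (hsub _ hp) htangent, hle, hbary⟩

end Coupling

section Box

variable {n : ℕ}

lemma box_eq_Icc (a b : Fin n → ℝ) : box a b = Icc a b := by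
  ext x
  exact forall_and

lemma l1dist_comm (x y : Fin n → ℝ) : l1dist x y = l1dist y x := by
  simp only [l1dist, abs_sub_comm]

lemma memL1.continuousOn {X : Set (Fin n → ℝ)} {u : (Fin n → ℝ) → ℝ} (hu : memL1 X u) :
    ContinuousOn u X := fun x hx => by
  have hdist : Continuous fun y => l1dist y x := by unfold l1dist; fun_prop
  have hlim : Tendsto (fun y => l1dist y x) (𝓝[X] x) (𝓝 0) := by
    simpa [l1dist] using hdist.continuousWithinAt.tendsto (x := x) (s := X)
  refine tendsto_iff_dist_tendsto_zero.2 (squeeze_zero' (.of_forall fun _ => dist_nonneg) ?_ hlim)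
  filter_upwards [self_mem_nhdsWithin] with y hy
  exact abs_sub_le_iff.2 ⟨hu y hy x hx, (hu x hx y hy).trans_eq (l1dist_comm x y)⟩

lemma memU_iff_increasingConvexOn {X : Set (Fin n → ℝ)} {u : (Fin n → ℝ) → ℝ} :
    memU X u ↔ IncreasingConvexOn X u :=
  ⟨fun ⟨hcont, hmono, hconv⟩ => ⟨hcont, hmono, hconv⟩,
    fun ⟨hcont, hmono, hconv⟩ => ⟨hcont, hmono, hconv⟩⟩

end Box

/-- **Coupling lemma for tight convex dominance.** Let `α ≼_cvx β` be Borel probability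
measures on the box `X`, let `u` be convex, coordinatewise nondecreasing and 1-Lipschitz
(w.r.t. ℓ¹) on `X` with `∫ u dα = ∫ u dβ`, and let `g` be a measurable selection of
subgradients of `u` with values in `[0,1]ⁿ`. Then there is a coupling `π` of `α` and `β`
such that `π`-a.s. at `(a,b)`: (i) `u(b) = u(a) + g(a)·(b − a)`; (ii) `g(a)` is a
subgradient of `u` at `b`; (iii) `E_π[Y | 𝔉₁] ≥ a` componentwise; and
(iv) `u(E_π[Y | 𝔉₁]) = u(a)`, where `𝔉₁` is the σ-algebra generated by the first
coordinate and `Y` the second-coordinate map. -/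
theorem coupling_lemma_tight_convex_dominance {n : ℕ} (a b : Fin n → ℝ)
    (hab : ∀ i, 0 ≤ a i ∧ a i < b i)
    (α β : Measure (Fin n → ℝ)) [IsProbabilityMeasure α] [IsProbabilityMeasure β]
    (hαsupp : α (box a b)ᶜ = 0) (hβsupp : β (box a b)ᶜ = 0)
    (hdom : ∀ v : (Fin n → ℝ) → ℝ, memU (box a b) v → (∫ x, v x ∂α) ≤ ∫ x, v x ∂β)
    (u : (Fin n → ℝ) → ℝ)
    (huconv : ConvexOn ℝ (box a b) u)
    (humono : ∀ x ∈ box a b, ∀ y ∈ box a b, (∀ i, x i ≤ y i) → u x ≤ u y)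
    (hulip : ∀ x ∈ box a b, ∀ y ∈ box a b, u x - u y ≤ l1dist x y)
    (htight : (∫ x, u x ∂α) = ∫ x, u x ∂β)
    (g : (Fin n → ℝ) → (Fin n → ℝ)) (hgmeas : Measurable g)
    (hg01 : ∀ z i, g z i ∈ Set.Icc (0:ℝ) 1)
    (hgsub : ∀ z ∈ box a b, ∀ y ∈ box a b, u z + ∑ i, g z i * (y i - z i) ≤ u y) :
    ∃ π : Measure ((Fin n → ℝ) × (Fin n → ℝ)), IsProbabilityMeasure π ∧
      π.map Prod.fst = α ∧ π.map Prod.snd = β ∧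
      (∀ᵐ ab ∂π,
        (u ab.2 = u ab.1 + ∑ i, g ab.1 i * (ab.2 i - ab.1 i)) ∧
        (∀ y ∈ box a b, u ab.2 + ∑ i, g ab.1 i * (y i - ab.2 i) ≤ u y) ∧
        (∀ i, ab.1 i ≤
          (π[(fun p : (Fin n → ℝ) × (Fin n → ℝ) => p.2) |
            MeasurableSpace.comap Prod.fst inferInstance]) ab i) ∧
        u ((π[(fun p : (Fin n → ℝ) × (Fin n → ℝ) => p.2) |
            MeasurableSpace.comap Prod.fst inferInstance]) ab) = u ab.1) := by
  have hK : IsCompact (box a b) := box_eq_Icc a b ▸ isCompact_Icc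
  have hconv : Convex ℝ (box a b) := box_eq_Icc a b ▸ convex_Icc a b
  have hu : IncreasingConvexOn (box a b) u := ⟨memL1.continuousOn hulip, humono, huconv⟩
  exact coupling_lemma_tight_convex_dominance_general hK hconv α β (mem_ae_iff.2 hαsupp)
    (mem_ae_iff.2 hβsupp) (fun v hv => hdom v (memU_iff_increasingConvexOn.2 hv)) hu htight hgmeas
    (fun z _ i => (hg01 z i).1) hgsub
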